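/- Assume 0 < c_f < min(10^{−4}, 1/(L₁ + 6)) and b = (1 + c_f L₁)/2. For any j ∈ {1, …, Q_k} and any p ∈ [b, 1], set q = (p − b)/(1 − b). Then KL(Ber(1 − F₀(p)) ‖ Ber(1 − F_j(p))) ≤ (1/300)·w_k^{2m} if q ∈ I_j, and KL(Ber(1 − F₀(p)) ‖ Ber(1 − F_j(p))) = 0 if q ∉ I_j. -/

import Mathlib

open Set MeasureTheory

/-- The basic mollifier `u₀(x) = exp(−1/(x(1/3 − x)))` on `(0, 1/3)`, `0` elsewhere. -/
noncomputable def u0 (x : ℝ) : ℝ :=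
  if x ∈ Set.Ioo (0 : ℝ) (1 / 3) then Real.exp (-(1 / (x * (1 / 3 - x)))) else 0

/-- The normalized primitive `u(x) = (∫₀^{1/3} u₀)⁻¹ · ∫_{−∞}^x u₀`. -/
noncomputable def uFn (x : ℝ) : ℝ :=
  (∫ t in (0 : ℝ)..(1 / 3), u0 t)⁻¹ * ∫ t in Set.Iic x, u0 t

/-- `L₁ = sup_x |u'(x)|`. -/
noncomputable def L1 : ℝ := ⨆ x : ℝ, |deriv uFn x|

/-- The bump function `B`. -/
noncomputable def bump (x : ℝ) : ℝ :=
  if x < 0 then 0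
  else if x ≤ 1 / 3 then uFn x
  else if x < 2 / 3 then 1
  else if x ≤ 1 then uFn (1 - x)
  else 0

/-- The bump function rescaled to the interval `[a, b]`. -/
noncomputable def bumpOn (a b x : ℝ) : ℝ := bump ((x - a) / (b - a))

/-- The interval widths: `w 0 = 1` and `w k = 3^(−k!)` for `k ≥ 1`. -/
noncomputable def wSeq : ℕ → ℝ := fun k => if k = 0 then 1 else (3 : ℝ) ^ (-(k.factorial : ℤ))

/-- `a, b : ℕ → ℝ` describe an admissible nested sequence of intervals:
`[a₀,b₀] = [0,1]` and `[a_{k+1}, b_{k+1}]` is a subinterval of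
`[a_k + w_k/3, b_k − w_k/3]` of length `w_{k+1}`. -/
def IsNestedTower (a b : ℕ → ℝ) : Prop :=
  a 0 = 0 ∧ b 0 = 1 ∧
  ∀ k : ℕ, a k + wSeq k / 3 ≤ a (k + 1) ∧ b (k + 1) ≤ b k - wSeq k / 3 ∧
    b (k + 1) - a (k + 1) = wSeq (k + 1)

/-- The bump tower `f(x) = c_f·Σ_{k=0}^∞ w_k^m·B_{[a_k,b_k]}(x)`. -/
noncomputable def towerFn (m : ℕ) (cf : ℝ) (a b : ℕ → ℝ) (x : ℝ) : ℝ :=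
  cf * ∑' k : ℕ, wSeq k ^ m * bumpOn (a k) (b k) x

/-- `g = f/(1+f)`, the normalization of a nonnegative function `f` to `[0,1)`. -/
noncomputable def gFn (f : ℝ → ℝ) (x : ℝ) : ℝ := f x / (1 + f x)

/-- The noise distribution function built from `f` with parameter `β`. -/
noncomputable def cdfF (f : ℝ → ℝ) (β : ℝ) (x : ℝ) : ℝ :=
  if x < β then 0
  else if x ≤ 1 then 1 - β / x - (1 - β) / x * gFn f ((x - β) / (1 - β))
  else if x ≤ 1 + β then 2 - (1 + β) / x
  else 1

/-- The truncated bump tower using only the levels `i < k`. -/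
noncomputable def towerFnBelow (m k : ℕ) (cf : ℝ) (a b : ℕ → ℝ) (x : ℝ) : ℝ :=
  cf * ∑ i ∈ Finset.range k, wSeq i ^ m * bumpOn (a i) (b i) x

/-- Kullback–Leibler divergence between Bernoulli distributions with success
probabilities `p` and `q`. -/
noncomputable def klBer (p q : ℝ) : ℝ :=
  p * Real.log (p / q) + (1 - p) * Real.log ((1 - p) / (1 - q))

theorem u0_nonneg (x : ℝ) : 0 ≤ u0 x := by
  unfold u0; split_ifs <;> positivity

theorem u0_le_one (x : ℝ) : u0 x ≤ 1 := by
  unfold u0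
  split_ifs with h
  · rw [Real.exp_le_one_iff]
    have h1 : 0 < x := h.1
    have h2 : 0 < 1 / 3 - x := by linarith [h.2]
    have : 0 < 1 / (x * (1 / 3 - x)) := by positivity
    linarith
  · norm_num

theorem u0_meas : Measurable u0 := by
  unfold u0
  refine Measurable.ite measurableSet_Ioo ?_ measurable_const
  fun_prop

theorem u0_eq_ind : u0 = (Set.Ioc (0 : ℝ) (1 / 3)).indicator u0 := by
  ext x
  by_cases h : x ∈ Set.Ioc (0 : ℝ) (1 / 3)
  · rw [Set.indicator_of_mem h]
  · rw [Set.indicator_of_notMem h]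
    unfold u0
    rw [if_neg]
    intro h'
    exact h ⟨h'.1, h'.2.le⟩

theorem u0_intOn : IntegrableOn u0 (Set.Ioc (0 : ℝ) (1 / 3)) := by
  refine Measure.integrableOn_of_bounded (M := 1) (by simp) u0_meas.aestronglyMeasurable ?_
  refine Filter.Eventually.of_forall fun x => ?_
  rw [Real.norm_eq_abs, abs_of_nonneg (u0_nonneg x)]
  exact u0_le_one x

theorem u0_int : Integrable u0 := by
  rw [u0_eq_ind, integrable_indicator_iff measurableSet_Ioc]
  exact u0_intOn

theorem u0_integral : ∫ t, u0 t = ∫ t in (0 : ℝ)..(1 / 3), u0 t := by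
  rw [intervalIntegral.integral_of_le (by norm_num), ← integral_indicator measurableSet_Ioc,
    ← u0_eq_ind]

theorem uFn_nonneg (x : ℝ) : 0 ≤ uFn x := by
  unfold uFn
  rw [← u0_integral]
  exact mul_nonneg (inv_nonneg.2 (integral_nonneg u0_nonneg))
    (setIntegral_nonneg measurableSet_Iic fun x _ => u0_nonneg x)

theorem uFn_le_one (x : ℝ) : uFn x ≤ 1 := by
  unfold uFn
  rw [← u0_integral]
  have h : ∫ t in Set.Iic x, u0 t ≤ ∫ t, u0 t :=
    setIntegral_le_integral u0_int (Filter.Eventually.of_forall u0_nonneg)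
  have h0 : 0 ≤ ∫ t, u0 t := integral_nonneg u0_nonneg
  calc _ ≤ (∫ t, u0 t)⁻¹ * ∫ t, u0 t := mul_le_mul_of_nonneg_left h (inv_nonneg.2 h0)
    _ ≤ 1 := inv_mul_le_one

theorem bump_nonneg (x : ℝ) : 0 ≤ bump x := by
  unfold bump
  split_ifs <;> first | exact uFn_nonneg _ | norm_num

theorem bump_le_one (x : ℝ) : bump x ≤ 1 := by
  unfold bump
  split_ifs <;> first | exact uFn_le_one _ | norm_num

theorem bumpOn_zero (a b x : ℝ) (hab : a < b) (h : x ∉ Set.Icc a b) : bumpOn a b x = 0 := by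
  unfold bumpOn bump
  have hd : 0 < b - a := by linarith
  by_cases h1 : x < a
  · rw [if_pos]
    exact div_neg_of_neg_of_pos (by linarith) hd
  · have h2 : b < x := by
      by_contra h2
      exact h ⟨by linarith, by linarith⟩
    have h3 : 1 < (x - a) / (b - a) := by
      rw [lt_div_iff₀ hd]; linarith
    rw [if_neg (by linarith), if_neg (by linarith), if_neg (by linarith), if_neg (by linarith)]

theorem wSeq_pos (k : ℕ) : 0 < wSeq k := by
  unfold wSeq; split_ifs <;> positivity

theorem wSeq_succ (k : ℕ) : wSeq (k + 1) ≤ wSeq k * (1 / 3) := by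
  unfold wSeq
  rw [if_neg (by omega)]
  split_ifs with h
  · subst h; norm_num
  · have h1 : k.factorial + 1 ≤ (k + 1).factorial := by
      rw [Nat.factorial_succ]
      have := Nat.factorial_pos k
      have : 1 ≤ k := by omega
      nlinarith
    have h2 : (3 : ℝ) ^ (-((k + 1).factorial : ℤ)) ≤ 3 ^ (-(k.factorial : ℤ) + -1) := by
      apply zpow_le_zpow_right₀ (by norm_num)
      have : (k.factorial : ℤ) + 1 ≤ (k + 1).factorial := by exact_mod_cast h1
      omega
    rw [zpow_add₀ (by norm_num)] at h2
    refine h2.trans (le_of_eq ?_)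
    norm_num

theorem wSeq_add (k n : ℕ) : wSeq (k + n) ≤ wSeq k * (1 / 3) ^ n := by
  induction n with
  | zero => simp
  | succ n ih =>
    have := wSeq_succ (k + n)
    rw [pow_succ, ← add_assoc]
    linarith

theorem wSeq_pow (m : ℕ) (hm : 1 ≤ m) (k n : ℕ) :
    wSeq (k + n) ^ m ≤ wSeq k ^ m * (1 / 3) ^ n := by
  calc _ ≤ (wSeq k * (1 / 3) ^ n) ^ m := pow_le_pow_left₀ (wSeq_pos _).le (wSeq_add k n) m
    _ = wSeq k ^ m * ((1 / 3) ^ n) ^ m := mul_pow _ _ _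
    _ ≤ _ := by
      apply mul_le_mul_of_nonneg_left _ (pow_nonneg (wSeq_pos k).le m)
      exact pow_le_of_le_one (by positivity) (pow_le_one₀ (by norm_num) (by norm_num)) (by omega)

theorem term_bd (m : ℕ) (hm : 1 ≤ m) (a b : ℕ → ℝ) (x : ℝ) (k n : ℕ) :
    wSeq (n + k) ^ m * bumpOn (a (n + k)) (b (n + k)) x ≤ wSeq k ^ m * (1 / 3) ^ n := by
  have h := wSeq_pow m hm k n
  rw [add_comm k n] at h
  refine le_trans ?_ h
  exact mul_le_of_le_one_right (pow_nonneg (wSeq_pos _).le _) (bump_le_one _)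

theorem term_nonneg (m : ℕ) (a b : ℕ → ℝ) (x : ℝ) (n : ℕ) :
    0 ≤ wSeq n ^ m * bumpOn (a n) (b n) x :=
  mul_nonneg (pow_nonneg (wSeq_pos _).le _) (bump_nonneg _)

theorem geo_summable (c : ℝ) : Summable fun n : ℕ => c * (1 / 3 : ℝ) ^ n :=
  (summable_geometric_of_lt_one (by norm_num) (by norm_num)).mul_left c

theorem tail_summable (m : ℕ) (hm : 1 ≤ m) (a b : ℕ → ℝ) (x : ℝ) (k : ℕ) :
    Summable fun n => wSeq (n + k) ^ m * bumpOn (a (n + k)) (b (n + k)) x :=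
  Summable.of_nonneg_of_le (fun n => term_nonneg m a b x (n + k))
    (fun n => term_bd m hm a b x k n) (geo_summable _)

theorem tail_le (m : ℕ) (hm : 1 ≤ m) (a b : ℕ → ℝ) (x : ℝ) (k : ℕ) :
    ∑' n, wSeq (n + k) ^ m * bumpOn (a (n + k)) (b (n + k)) x ≤ 3 / 2 * wSeq k ^ m := by
  refine ((tail_summable m hm a b x k).tsum_le_tsum (fun n => term_bd m hm a b x k n)
    (geo_summable _)).trans (le_of_eq ?_)
  rw [tsum_mul_left, tsum_geometric_of_lt_one (by norm_num) (by norm_num)]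
  ring

theorem tower_split (m : ℕ) (hm : 1 ≤ m) (cf : ℝ) (a b : ℕ → ℝ) (x : ℝ) (k : ℕ) :
    towerFn m cf a b x = towerFnBelow m k cf a b x +
      cf * ∑' n, wSeq (n + k) ^ m * bumpOn (a (n + k)) (b (n + k)) x := by
  unfold towerFn towerFnBelow
  rw [← mul_add]
  congr 1
  exact (Summable.sum_add_tsum_nat_add k (by simpa using tail_summable m hm a b x 0)).symm

theorem klBer_self (p : ℝ) : klBer p p = 0 := by
  unfold klBer
  by_cases h : p = 0
  · simp [h]
  by_cases h' : 1 - p = 0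
  · simp [h', div_self h]
  · simp [div_self h, div_self h']

theorem klBer_le (p q : ℝ) (hp : 0 < p) (hp1 : p < 1) (hq : 0 < q) (hq1 : q < 1) :
    klBer p q ≤ (p - q) ^ 2 / (q * (1 - q)) := by
  unfold klBer
  have h1 : 0 < 1 - p := by linarith
  have h2 : 0 < 1 - q := by linarith
  have e1 := mul_le_mul_of_nonneg_left (Real.log_le_sub_one_of_pos (div_pos hp hq)) hp.le
  have e2 := mul_le_mul_of_nonneg_left (Real.log_le_sub_one_of_pos (div_pos h1 h2)) h1.le
  refine (add_le_add e1 e2).trans (le_of_eq ?_)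
  field_simp
  ring

theorem nested_mono (a b : ℕ → ℝ) (hab : IsNestedTower a b) (k n : ℕ) :
    a k ≤ a (k + n) ∧ b (k + n) ≤ b k := by
  induction n with
  | zero => simp
  | succ n ih =>
    obtain ⟨h1, h2, -⟩ := hab.2.2 (k + n)
    have := wSeq_pos (k + n)
    constructor
    · rw [← add_assoc]; linarith [ih.1]
    · rw [← add_assoc]; linarith [ih.2]

theorem nested_lt (a b : ℕ → ℝ) (hab : IsNestedTower a b) (k : ℕ) : a k < b k := by
  cases k with
  | zero => rw [hab.1, hab.2.1]; norm_num
  | succ n =>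
    have := (hab.2.2 n).2.2
    have := wSeq_pos (n + 1)
    linarith

theorem L1_nonneg : 0 ≤ L1 := Real.iSup_nonneg fun _ => abs_nonneg _

theorem cdf_eq (f : ℝ → ℝ) (β p q : ℝ) (h0 : 0 < p) (hb : β < 1) (hp : p ∈ Set.Icc β 1)
    (hq : q = (p - β) / (1 - β)) :
    1 - cdfF f β p = 1 - (1 - β) / p * (q - gFn f q) := by
  unfold cdfF
  rw [if_neg (not_lt.2 hp.1), if_pos hp.2, ← hq]
  have hb' : 1 - β ≠ 0 := by linarith
  have : (1 - β) * q = p - β := by rw [hq]; field_simp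
  have e : (1 - β) / p * (q - gFn f q) = ((1 - β) * q) / p - (1 - β) / p * gFn f q := by ring
  rw [e, this]
  field_simp

theorem kl_core (r q g0 g1 c W : ℝ) (hr0 : 0 < r) (hr1 : r ≤ 1) (hrq : r * q ≤ 1 / 2)
    (hq : 1 / 3 ≤ q) (hc : 0 < c) (hc1 : c < 1 / 10000)
    (h0 : 0 ≤ g0) (h01 : g0 ≤ g1) (h1 : g1 ≤ 3 / 2 * c) (hd : g1 - g0 ≤ 3 / 2 * c * W)
    (hW : 0 < W) :
    klBer (1 - r * (q - g0)) (1 - r * (q - g1)) ≤ 1 / 300 * W ^ 2 := by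
  have hs0 : 0 < q - g0 := by linarith
  have hs1 : 1 / 4 ≤ q - g1 := by linarith
  have t0 : 0 < r * (q - g0) := by positivity
  have t1 : r * (1 / 4) ≤ r * (q - g1) := mul_le_mul_of_nonneg_left hs1 hr0.le
  have t0' : r * (q - g0) ≤ 1 / 2 := by nlinarith
  have t1' : r * (q - g1) ≤ 1 / 2 := by nlinarith
  refine (klBer_le _ _ (by linarith) (by linarith) (by linarith) (by linarith)).trans ?_
  rw [div_le_iff₀ (mul_pos (by linarith) (by linarith))]
  have hden : r * (1 / 8) ≤ (1 - r * (q - g1)) * (1 - (1 - r * (q - g1))) := by nlinarith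
  have hD : (g1 - g0) ^ 2 ≤ (3 / 2 * c * W) ^ 2 := pow_le_pow_left₀ (by linarith) hd 2
  have hcc : c ^ 2 ≤ (1 / 10000) ^ 2 := pow_le_pow_left₀ hc.le hc1.le 2
  have hD2 : (g1 - g0) ^ 2 ≤ 1 / 2400 * W ^ 2 := by
    refine hD.trans ?_
    have : (3 / 2 * c * W) ^ 2 = 9 / 4 * c ^ 2 * W ^ 2 := by ring
    rw [this]
    apply mul_le_mul_of_nonneg_right _ (sq_nonneg W)
    linarith
  calc (1 - r * (q - g0) - (1 - r * (q - g1))) ^ 2 = r ^ 2 * (g1 - g0) ^ 2 := by ring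
    _ ≤ r * (1 / 2400 * W ^ 2) :=
      mul_le_mul (by nlinarith) hD2 (sq_nonneg _) hr0.le
    _ = 1 / 300 * W ^ 2 * (r * (1 / 8)) := by ring
    _ ≤ _ := mul_le_mul_of_nonneg_left hden (by positivity)

/-- Per-round KL bound between the instances `F₀` and `F_j`.  Here `a, b` is a full
admissible nested tower whose level-`k` interval is the `j`-th cell
`I_j` of the level-`k` grid, `F_j` is built from the full tower and `F₀` from its
truncation below level `k`.  For `p ∈ [b,1]` and `q = (p−b)/(1−b)`:
`KL(Ber(1−F₀(p)) ‖ Ber(1−F_j(p))) ≤ w_k^{2m}/300` if `q ∈ I_j` and `= 0` if `q ∉ I_j`. -/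
theorem per_round_KL_bound (m : ℕ) (hm : 1 ≤ m) (cf : ℝ)
    (hcf : 0 < cf) (hcf' : cf < 1 / (L1 + 6)) (hcf'' : cf < 1 / 10000)
    (k : ℕ) (hk : 3 ≤ k)
    (a b : ℕ → ℝ) (hab : IsNestedTower a b)
    (j : ℕ) (hj1 : 1 ≤ j) (hjQ : (j : ℝ) ≤ wSeq (k - 1) / (3 * wSeq k))
    (hak : a k = a (k - 1) + wSeq (k - 1) / 3 + ((j : ℝ) - 1) * wSeq k)
    (β : ℝ) (hβ : β = (1 + cf * L1) / 2)
    (p : ℝ) (hp : p ∈ Set.Icc β 1) (q : ℝ) (hq : q = (p - β) / (1 - β)) :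
    (q ∈ Set.Icc (a k) (b k) →
      klBer (1 - cdfF (towerFnBelow m k cf a b) β p) (1 - cdfF (towerFn m cf a b) β p) ≤
        1 / 300 * wSeq k ^ (2 * m)) ∧
    (q ∉ Set.Icc (a k) (b k) →
      klBer (1 - cdfF (towerFnBelow m k cf a b) β p) (1 - cdfF (towerFn m cf a b) β p)
        = 0) := by
  have hL := L1_nonneg
  have hcL : cf * (L1 + 6) < 1 := by rwa [lt_div_iff₀ (by linarith)] at hcf'
  have hcL0 : 0 ≤ cf * L1 := by positivity
  have hβ0 : 1 / 2 ≤ β := by linarith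
  have hβ1 : β < 1 := by nlinarith
  have hp0 : 0 < p := by linarith [hp.1]
  rw [cdf_eq _ β p q hp0 hβ1 hp hq, cdf_eq _ β p q hp0 hβ1 hp hq]
  constructor
  · intro hqI
    have hq3 : 1 / 3 ≤ q := by
      have h1 := (hab.2.2 0).1
      have h2 := (nested_mono a b hab 1 (k - 1)).1
      rw [show 1 + (k - 1) = k by omega] at h2
      have h3 : wSeq 0 = 1 := by simp [wSeq]
      rw [h3, hab.1] at h1
      norm_num at h1
      linarith [hqI.1]
    have hsp := tower_split m hm cf a b q k
    have hf0 : 0 ≤ towerFnBelow m k cf a b q :=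
      mul_nonneg hcf.le (Finset.sum_nonneg fun i _ => term_nonneg m a b q i)
    have hT0 : 0 ≤ ∑' n, wSeq (n + k) ^ m * bumpOn (a (n + k)) (b (n + k)) q :=
      tsum_nonneg fun n => term_nonneg m a b q (n + k)
    have hT1 := tail_le m hm a b q k
    have hf1 : towerFn m cf a b q ≤ 3 / 2 * cf := by
      have h := tail_le m hm a b q 0
      have h3 : wSeq 0 = 1 := by simp [wSeq]
      rw [h3] at h
      simp only [add_zero, one_pow, mul_one] at h
      unfold towerFn
      nlinarith
    set T := ∑' n, wSeq (n + k) ^ m * bumpOn (a (n + k)) (b (n + k)) q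
    have hcT : 0 ≤ cf * T := by positivity
    have hcT1 : cf * T ≤ 3 / 2 * cf * wSeq k ^ m := by nlinarith
    unfold gFn
    set x := towerFnBelow m k cf a b q
    set y := towerFn m cf a b q
    have hy0 : 0 ≤ y := by linarith
    have hdiff : y / (1 + y) - x / (1 + x) = (y - x) / ((1 + y) * (1 + x)) := by
      field_simp
      ring
    have hyx : 0 ≤ y - x := by linarith
    rw [show wSeq k ^ (2 * m) = (wSeq k ^ m) ^ 2 by rw [← pow_mul, mul_comm]]
    apply kl_core _ _ _ _ cf _ _ _ _ hq3 hcf hcf''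
    · positivity
    · have : 0 ≤ y / (1 + y) - x / (1 + x) := by rw [hdiff]; positivity
      linarith
    · exact (div_le_self hy0 (by linarith)).trans hf1
    · rw [hdiff]
      refine (div_le_self hyx ?_).trans (by linarith)
      nlinarith
    · exact pow_pos (wSeq_pos k) m
    · exact div_pos (by linarith) hp0
    · rw [div_le_one hp0]; linarith [hp.1]
    · have hb' : 1 - β ≠ 0 := by linarith
      have : (1 - β) / p * q = (p - β) / p := by rw [hq]; field_simp
      rw [this, div_le_iff₀ hp0]
      linarith [hp.2]
  · intro hqI
    have h : towerFn m cf a b q = towerFnBelow m k cf a b q := by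
      rw [tower_split m hm cf a b q k]
      have : ∀ n, wSeq (n + k) ^ m * bumpOn (a (n + k)) (b (n + k)) q = 0 := by
        intro n
        rw [bumpOn_zero _ _ _ (nested_lt a b hab _), mul_zero]
        intro hh
        have := nested_mono a b hab k n
        rw [add_comm k n] at this
        exact hqI ⟨this.1.trans hh.1, hh.2.trans this.2⟩
      simp [this]
    unfold gFn
    rw [h]
    exact klBer_self _
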